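/- For every formula φ ∈ L_⊞, {φ} ⊢_⊞ nf(φ) and {nf(φ)} ⊢_⊞ φ. In particular, for every formula φ built from a single propositional variable p, {φ} ⊢_⊞ p and {p} ⊢_⊞ φ, so any two formulas in one and the same variable are interderivable in ⊢_⊞. -/

import Mathlib

/-- Formulas built from countably many propositional variables with a single
binary connective `⊞` (platypus). -/
inductive Fm : Type where
  | var : ℕ → Fm
  | pl : Fm → Fm → Fm
deriving DecidableEq

namespace Fm

/-- The set of propositional variables occurring in a formula. -/
def vars : Fm → Set ℕ
  | var n => {n}
  | pl a b => vars a ∪ vars b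

/-- A `𝔅_⊞`-valuation: a two-valued function such that
`v (φ ⊞ ψ) ∈ {min (v φ) (v ψ), max (v φ) (v ψ)}`. -/
def IsVal (v : Fm → Bool) : Prop :=
  ∀ a b : Fm, v (a.pl b) = (v a && v b) ∨ v (a.pl b) = (v a || v b)

/-- The multiple-conclusion consequence `Γ ⊩_⊞ Δ`. -/
def Mc (Γ Δ : Set Fm) : Prop :=
  ∀ v : Fm → Bool, IsVal v → (∀ φ ∈ Γ, v φ = true) → ∃ ψ ∈ Δ, v ψ = true

/-- The single-conclusion consequence `Γ ⊢_⊞ φ`. -/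
def Sc (Γ : Set Fm) (φ : Fm) : Prop := Mc Γ {φ}

end Fm

namespace Fm

/-- The normal form of a formula: `nf p = p` and `nf (φ ⊞ ψ)` is `nf φ` if
`nf φ = nf ψ` and `φ ⊞ ψ` otherwise. -/
def nf : Fm → Fm
  | var n => var n
  | pl a b => if nf a = nf b then nf a else pl a b

end Fm

namespace Fm

variable {v : Fm → Bool} {φ ψ χ : Fm} {p : ℕ}

-- `min` and `max` agree on equal arguments, so here the non-determinism of `⊞` disappears.
theorem IsVal.apply_pl_of_eq (hv : IsVal v) (h : v φ = v ψ) : v (φ.pl ψ) = v φ := by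
  rcases hv φ ψ with hmin | hmax
  · rw [hmin, ← h, Bool.and_self]
  · rw [hmax, ← h, Bool.or_self]

theorem nf_pl_of_eq (h : φ.nf = ψ.nf) : (φ.pl ψ).nf = φ.nf :=
  if_pos h

theorem nf_pl_of_ne (h : φ.nf ≠ ψ.nf) : (φ.pl ψ).nf = φ.pl ψ :=
  if_neg h

theorem IsVal.apply_nf (hv : IsVal v) (φ : Fm) : v φ.nf = v φ := by
  induction φ with
  | var n => rfl
  | pl φ ψ ihφ ihψ =>
    by_cases hnf : φ.nf = ψ.nf
    · have heq : v φ = v ψ := by rw [← ihφ, hnf, ihψ]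
      rw [nf_pl_of_eq hnf, ihφ, hv.apply_pl_of_eq heq]
    · rw [nf_pl_of_ne hnf]

theorem nf_eq_var_of_vars_subset (h : φ.vars ⊆ {p}) : φ.nf = var p := by
  induction φ with
  | var n => exact congrArg var (Set.singleton_subset_singleton.mp h)
  | pl φ ψ ihφ ihψ =>
    obtain ⟨hφ, hψ⟩ := Set.union_subset_iff.mp h
    rw [nf_pl_of_eq ((ihφ hφ).trans (ihψ hψ).symm), ihφ hφ]

/-- Interderivability of two formulas in `⊢_⊞`: each is a consequence of the other. -/
def Interderivable (φ ψ : Fm) : Prop :=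
  Sc {φ} ψ ∧ Sc {ψ} φ

theorem sc_singleton_iff : Sc {φ} ψ ↔ ∀ v, IsVal v → v φ = true → v ψ = true := by
  simp only [Sc, Mc, Set.mem_singleton_iff, forall_eq, exists_eq_left]

theorem interderivable_iff_forall_isVal :
    Interderivable φ ψ ↔ ∀ v, IsVal v → v φ = v ψ := by
  simp only [Interderivable, sc_singleton_iff, ← forall_and, ← iff_def, ← Bool.eq_iff_iff]

theorem Interderivable.symm (h : Interderivable φ ψ) : Interderivable ψ φ :=
  And.symm h

theorem Interderivable.trans (hφψ : Interderivable φ ψ) (hψχ : Interderivable ψ χ) :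
    Interderivable φ χ := by
  rw [interderivable_iff_forall_isVal] at *
  exact fun v hv => (hφψ v hv).trans (hψχ v hv)

theorem interderivable_nf (φ : Fm) : Interderivable φ φ.nf :=
  interderivable_iff_forall_isVal.mpr fun _ hv => (hv.apply_nf φ).symm

theorem interderivable_var_of_vars_subset (h : φ.vars ⊆ {p}) : Interderivable φ (var p) :=
  nf_eq_var_of_vars_subset h ▸ interderivable_nf φ

end Fm

open Fm in
/-- every formula is interderivable with its normal form; in
particular every formula in a single variable `p` is interderivable with `p`,
so any two formulas in one and the same variable are interderivable. -/
theorem platypus_nf_interderivable :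
    (∀ φ : Fm, Sc {φ} φ.nf ∧ Sc {φ.nf} φ) ∧
    (∀ (p : ℕ) (φ : Fm), φ.vars ⊆ {p} → Sc {φ} (Fm.var p) ∧ Sc {Fm.var p} φ) ∧
    (∀ (p : ℕ) (φ ψ : Fm), φ.vars ⊆ {p} → ψ.vars ⊆ {p} →
      Sc {φ} ψ ∧ Sc {ψ} φ) :=
  ⟨interderivable_nf,
    fun _ _ hφ => interderivable_var_of_vars_subset hφ,
    fun _ _ _ hφ hψ =>
      (interderivable_var_of_vars_subset hφ).trans (interderivable_var_of_vars_subset hψ).symm⟩
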